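/- arXiv:math/0411182 — 4 statements merged into one kernel-verified Lean document; each statement's English description precedes it below -/
import Mathlib

section
/- Let λ ∈ Δ ∩ P(R∨) and let p ∈ 𝒫 be a billiard path of Δ-length λ, i.e. p is linear with derivative ν_i ∈ Wλ on [a_{i−1}, a_i] for some real numbers 0 = a₀ < a₁ < … < a_r = 1 and vectors ν₁, …, ν_r in the W-orbit of λ. Then p is an LS path if and only if at each break point x_i = p(a_i) (0 < i < r) there exists a chain (η₀, …, η_s) of nonzero vectors with η₀ a positive multiple of ν_i and η_s a positive multiple of ν_{i+1}, together with positive roots β₁, …, β_s ∈ R⁺ satisfying β_j(x_i) ∈ ℤ, τ_{β_j}(η_{j−1}) = η_j, β_j(η_{j−1}) < 0 and dist_W(η_{j−1}, η_j) = 1 for every j (i.e. p is a Hecke path satisfying the maximal chain condition at each break point, the chain lying in the stabilizer of x_i in the affine Weyl group and being maximal as a W-chain). -/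
noncomputable section

/-- A finite, reduced, crystallographic root system `R` on the dual of a Euclidean
vector space `V`, together with a fixed choice of positive and simple roots.
Each root `α ∈ R` is a linear functional on `V`, with coroot `α∨ ∈ V` satisfying
`α(α∨) = 2`; `β ∘ τ_α = β - β(α∨) • α` is again a root for all roots `α, β`, and
`α(β∨) ∈ ℤ` for all roots `α, β`. -/
structure CRS (V : Type*) [NormedAddCommGroup V] [InnerProductSpace ℝ V]
    [FiniteDimensional ℝ V] where
  /-- the finite set of roots, viewed as linear functionals on `V` -/
  R : Finset (V →ₗ[ℝ] ℝ)
  zero_notMem : (0 : V →ₗ[ℝ] ℝ) ∉ R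
  /-- the coroot `α∨ ∈ V` of a root `α` -/
  coroot : (V →ₗ[ℝ] ℝ) → V
  pairing_self : ∀ α ∈ R, α (coroot α) = 2
  neg_mem : ∀ α ∈ R, -α ∈ R
  reduced : ∀ α ∈ R, ∀ c : ℝ, c • α ∈ R → c = 1 ∨ c = -1
  /-- stability of `R` under the reflections: `β ∘ τ_α = β - β(α∨) • α ∈ R` -/
  reflect_mem : ∀ α ∈ R, ∀ β ∈ R, β - β (coroot α) • α ∈ R
  /-- the crystallographic condition `α(β∨) ∈ ℤ` -/
  crystal : ∀ α ∈ R, ∀ β ∈ R, ∃ n : ℤ, α (coroot β) = (n : ℝ)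
  /-- the positive roots `R⁺` -/
  Rpos : Finset (V →ₗ[ℝ] ℝ)
  Rpos_subset : Rpos ⊆ R
  pos_iff : ∀ α ∈ R, (α ∈ Rpos ↔ -α ∉ Rpos)
  /-- the simple roots `Φ` -/
  simple : Finset (V →ₗ[ℝ] ℝ)
  simple_subset : simple ⊆ Rpos
  /-- every positive root is a nonnegative combination of the simple roots -/
  simple_combo : ∀ α ∈ Rpos, ∃ c : (V →ₗ[ℝ] ℝ) → ℝ,
    (∀ β, 0 ≤ c β) ∧ α = ∑ β ∈ simple, c β • β

namespace CRS

variable {V : Type*} [NormedAddCommGroup V] [InnerProductSpace ℝ V]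
  [FiniteDimensional ℝ V] (P : CRS V)

/-- The reflection `τ_α : x ↦ x − α(x) • α∨`. -/
def refl (α : V →ₗ[ℝ] ℝ) : V → V := fun x => x - α x • P.coroot α

/-- The closed positive Weyl chamber `Δ = {x ∈ V : α(x) ≥ 0 for all α ∈ R⁺}`. -/
def chamber : Set V := {x : V | ∀ α ∈ P.Rpos, 0 ≤ α x}

/-- `w : V → V` is an element of the Weyl group `W` (a composition of reflections
in roots of `R`). -/
def IsWeyl (w : V → V) : Prop :=
  ∃ l : List (V →ₗ[ℝ] ℝ), (∀ γ ∈ l, γ ∈ P.R) ∧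
    w = l.foldr (fun γ f => P.refl γ ∘ f) id

/-- `u` lies in the `W`-orbit of `v`. -/
def SameOrbit (v u : V) : Prop := ∃ w : V → V, P.IsWeyl w ∧ w v = u

/-- `μ ∼_W ν` : `μ` and `ν` lie in a common closed Weyl chamber of `W`. -/
def SameChamber (μ ν : V) : Prop :=
  ∃ w : V → V, P.IsWeyl w ∧ w μ ∈ P.chamber ∧ w ν ∈ P.chamber

/-- `(η 0, …, η m)` is a `W`-chain realized by the positive roots `β 0, …, β (m-1)`:
all `η i` are nonzero, `η (i+1) = τ_{β i} (η i)` and `β i (η i) < 0`. -/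
def IsChain (m : ℕ) (η : ℕ → V) (β : ℕ → (V →ₗ[ℝ] ℝ)) : Prop :=
  (∀ i ≤ m, η i ≠ 0) ∧
  ∀ i < m, β i ∈ P.Rpos ∧ η (i + 1) = P.refl (β i) (η i) ∧ β i (η i) < 0

/-- `ν ≥ μ` : there exists a `W`-chain from `ν` to `μ` (length 0 allowed). -/
def ChainGE (ν μ : V) : Prop :=
  ∃ (m : ℕ) (η : ℕ → V) (β : ℕ → (V →ₗ[ℝ] ℝ)),
    P.IsChain m η β ∧ η 0 = ν ∧ η m = μ

/-- `ν > μ`. -/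
def ChainGT (ν μ : V) : Prop := P.ChainGE ν μ ∧ ν ≠ μ

/-- The set of lengths of `W`-chains from `ν` to `μ`. -/
def chainLengths (ν μ : V) : Set ℕ :=
  {m | ∃ (η : ℕ → V) (β : ℕ → (V →ₗ[ℝ] ℝ)), P.IsChain m η β ∧ η 0 = ν ∧ η m = μ}

/-- `dist_W(ν, μ) = d` : `d` is the maximal length of a `W`-chain from `ν` to `μ`. -/
def DistW (ν μ : V) (d : ℕ) : Prop := IsGreatest (P.chainLengths ν μ) d

/-- An `a`-chain for `(ν, μ)` (Littelmann): a `W`-chain from `ν` to `μ` such that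
`β i (a • η i) ∈ ℤ` and `dist_W (η i, η (i+1)) = 1` for every step. -/
def AChainFor (a : ℝ) (ν μ : V) : Prop :=
  ∃ (m : ℕ) (η : ℕ → V) (β : ℕ → (V →ₗ[ℝ] ℝ)),
    P.IsChain m η β ∧ η 0 = ν ∧ η m = μ ∧
    (∀ i < m, ∃ n : ℤ, β i (a • η i) = (n : ℝ)) ∧
    (∀ i < m, P.DistW (η i) (η (i + 1)) 1)

/-- `w` belongs to the subgroup `W′ ≤ W` generated by the reflections in `Φ' ⊆ Φ`. -/
def IsWeylSub (Φ' : Finset (V →ₗ[ℝ] ℝ)) (w : V → V) : Prop :=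
  ∃ l : List (V →ₗ[ℝ] ℝ), (∀ γ ∈ l, γ ∈ Φ') ∧
    w = l.foldr (fun γ f => P.refl γ ∘ f) id

/-- A `W′`-chain: a `W`-chain all of whose reflections `τ_{β i}` lie in `W′`. -/
def IsChainSub (Φ' : Finset (V →ₗ[ℝ] ℝ)) (m : ℕ) (η : ℕ → V)
    (β : ℕ → (V →ₗ[ℝ] ℝ)) : Prop :=
  (∀ i ≤ m, η i ≠ 0) ∧
  ∀ i < m, β i ∈ P.Rpos ∧ P.IsWeylSub Φ' (P.refl (β i)) ∧
    η (i + 1) = P.refl (β i) (η i) ∧ β i (η i) < 0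

/-- `ν ≥_{W′} μ` : there exists a `W′`-chain from `ν` to `μ` (length 0 allowed). -/
def ChainGESub (Φ' : Finset (V →ₗ[ℝ] ℝ)) (ν μ : V) : Prop :=
  ∃ (m : ℕ) (η : ℕ → V) (β : ℕ → (V →ₗ[ℝ] ℝ)),
    P.IsChainSub Φ' m η β ∧ η 0 = ν ∧ η m = μ

/-- `ν ≳_{W′} μ` : there exists `b ≠ 0` with `ν ≥_{W′} b` and `b ∼_W μ`. -/
def Gtrsim (Φ' : Finset (V →ₗ[ℝ] ℝ)) (ν μ : V) : Prop :=
  ∃ b : V, b ≠ 0 ∧ P.ChainGESub Φ' ν b ∧ P.SameChamber b μ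

/-- A chain relative to the stabilizer `W_x` of `x` in the affine Weyl group:
all reflecting roots satisfy `β i (x) ∈ ℤ`. -/
def IsChainAt (x : V) (m : ℕ) (η : ℕ → V) (β : ℕ → (V →ₗ[ℝ] ℝ)) : Prop :=
  (∀ i ≤ m, η i ≠ 0) ∧
  ∀ i < m, β i ∈ P.Rpos ∧ (∃ n : ℤ, β i x = (n : ℝ)) ∧
    η (i + 1) = P.refl (β i) (η i) ∧ β i (η i) < 0

/-- `v ≥_{W_x} u`. -/
def ChainGEAt (x v u : V) : Prop :=
  ∃ (m : ℕ) (η : ℕ → V) (β : ℕ → (V →ₗ[ℝ] ℝ)),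
    P.IsChainAt x m η β ∧ η 0 = v ∧ η m = u

/-- `x` belongs to the coweight lattice `P(R∨) = {x : α(x) ∈ ℤ ∀ α ∈ R}`. -/
def IsCoweight (x : V) : Prop := ∀ α ∈ P.R, ∃ n : ℤ, α x = (n : ℝ)

/-- The coroot lattice `Q(R∨)`, the group generated by the coroots. -/
def corootLattice : AddSubgroup V :=
  AddSubgroup.closure (P.coroot '' (P.R : Set (V →ₗ[ℝ] ℝ)))

/-- `w` is an element of the affine Weyl group `W_aff`, generated by the affine
reflections `σ_{α,t}(x) = x − (α(x) − t) • α∨`, `α ∈ R`, `t ∈ ℤ`. -/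
def IsAffWeyl (w : V → V) : Prop :=
  ∃ l : List ((V →ₗ[ℝ] ℝ) × ℤ), (∀ q ∈ l, q.1 ∈ P.R) ∧
    w = l.foldr (fun q f => (fun x => x - (q.1 x - (q.2 : ℝ)) • P.coroot q.1) ∘ f) id

/-- `w` is a word of length `n` in the simple reflections. -/
def SimpleWord (w : V → V) (n : ℕ) : Prop :=
  ∃ l : List (V →ₗ[ℝ] ℝ), l.length = n ∧ (∀ γ ∈ l, γ ∈ P.simple) ∧
    w = l.foldr (fun γ f => P.refl γ ∘ f) id

/-- The length function `ℓ(μ) = min{d_W(w,1) : w ∈ W, w⁻¹(μ) ∈ Δ}`. -/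
def ell (μ : V) : ℕ := sInf {n : ℕ | ∃ w : V → V, P.SimpleWord w n ∧ w μ ∈ P.chamber}

end CRS

/-- `p` is linear (affine) on `[s,t]` with velocity `v`. -/
def IsLinOn {V : Type*} [AddCommGroup V] [Module ℝ V]
    (p : ℝ → V) (s t : ℝ) (v : V) : Prop :=
  ∀ u ∈ Set.Icc s t, p u = p s + (u - s) • v

/-- `p` is piecewise linear on `[s,t]` with breakpoints `a 0 < … < a r` and
velocities `ν 0, …, ν (r-1)`. -/
def PLOn {V : Type*} [AddCommGroup V] [Module ℝ V]
    (p : ℝ → V) (s t : ℝ) (r : ℕ) (a : ℕ → ℝ) (ν : ℕ → V) : Prop :=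
  a 0 = s ∧ a r = t ∧ (∀ i < r, a i < a (i + 1)) ∧
    ∀ i < r, IsLinOn p (a i) (a (i + 1)) (ν i)

namespace CRS

variable {V : Type*} [NormedAddCommGroup V] [InnerProductSpace ℝ V]
  [FiniteDimensional ℝ V] (P : CRS V)

/-- `p` is a billiard path on `[s,t]` : piecewise linear, with all velocity vectors
in a single `W`-orbit. -/
def BilliardOn (p : ℝ → V) (s t : ℝ) : Prop :=
  ∃ (r : ℕ) (a : ℕ → ℝ) (ν : ℕ → V), 0 < r ∧ PLOn p s t r a ν ∧
    ∀ i j, i < r → j < r → P.SameOrbit (ν i) (ν j)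

/-- The `Δ`-length of `p` on `[s,t]` is `lam` : `lam = Σ_i (a (i+1) - a i) • u i` where
`u i` is the representative in `Δ` of the `W`-orbit of the velocity `ν i`. -/
def DeltaLenOn (p : ℝ → V) (s t : ℝ) (lam : V) : Prop :=
  ∃ (r : ℕ) (a : ℕ → ℝ) (ν u : ℕ → V), 0 < r ∧ PLOn p s t r a ν ∧
    (∀ i < r, u i ∈ P.chamber ∧ P.SameOrbit (ν i) (u i)) ∧
    lam = ∑ i ∈ Finset.range r, (a (i + 1) - a i) • u i

/-- The chain condition for a path `p` : at each `t ∈ (0,1)` there is `μ ≠ 0` with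
`p′₋(t) ≥_{W_{p(t)}} μ` and `μ ∼_W p′₊(t)`. -/
def ChainCondition (p : ℝ → V) : Prop :=
  ∀ t ∈ Set.Ioo (0 : ℝ) 1, ∀ vm vp : V,
    HasDerivWithinAt p vm (Set.Iic t) t → HasDerivWithinAt p vp (Set.Ici t) t →
    ∃ μ : V, μ ≠ 0 ∧ P.ChainGEAt (p t) vm μ ∧ P.SameChamber μ vp

/-- A Hecke path: a billiard path on `[0,1]` with `p′₋(t) ≥_{W_{p(t)}} p′₊(t)` for
all `t ∈ (0,1)`. -/
def IsHeckePath (p : ℝ → V) : Prop :=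
  (∃ (r : ℕ) (a : ℕ → ℝ) (ν : ℕ → V), 0 < r ∧ PLOn p 0 1 r a ν ∧
    ∀ i j, i < r → j < r → P.SameOrbit (ν i) (ν j)) ∧
  ∀ t ∈ Set.Ioo (0 : ℝ) 1, ∀ vm vp : V,
    HasDerivWithinAt p vm (Set.Iic t) t → HasDerivWithinAt p vp (Set.Ici t) t →
    P.ChainGEAt (p t) vm vp

end CRS

/-- The extension of a continuous path on `[0,1]` to `ℝ` by the projection to `[0,1]`. -/
def extIcc {V : Type*} [TopologicalSpace V]
    (p : C(Set.Icc (0 : ℝ) 1, V)) : ℝ → V :=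
  fun t => p (Set.projIcc 0 1 zero_le_one t)

/-- `p` is the concatenation `π_{μ 1} * ⋯ * π_{μ n}` of the geodesic segments with
increments `μ 1, …, μ n`, traversed consecutively with constant speed. -/
def ConcatOf {V : Type*} [NormedAddCommGroup V] [InnerProductSpace ℝ V]
    (p : ℝ → V) (n : ℕ) (μ : ℕ → V) : Prop :=
  ∃ (a : ℕ → ℝ) (v : ℕ → V), a 0 = 0 ∧ a n = 1 ∧ (∀ j < n, a j ≤ a (j + 1)) ∧
    (∀ j, 1 ≤ j → j ≤ n →
      IsLinOn p (a (j - 1)) (a j) (v j) ∧ (a j - a (j - 1)) • v j = μ j) ∧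
    (∀ j k, 1 ≤ j → j ≤ n → 1 ≤ k → k ≤ n → ‖v j‖ = ‖v k‖)

/-- The path `t ↦ −t • v` on `[0, 1/2]` followed by `t ↦ (t−1) • v` on `[1/2, 1]`. -/
def zigzag {V : Type*} [AddCommGroup V] [Module ℝ V] (v : V) : ℝ → V :=
  fun t => if t ≤ 1 / 2 then (-t) • v else (t - 1) • v

/-!
Write `xᵢ = p (aᵢ)` for the break points and `Λ = P(R∨)`. An `aᵢ`-chain asks for `β (aᵢ η) ∈ ℤ`
where a Hecke chain asks for `β (xᵢ) ∈ ℤ`, and these agree as soon as `xᵢ ≡ aᵢ η` modulo `Λ`.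
Reflecting `η` in a root `β` with `β (aᵢ η) ∈ ℤ` changes `aᵢ η` by an integral multiple of a coroot,
which lies in `Λ` by the crystallographic condition. Hence the congruence survives along either kind
of chain, so `xᵢ ≡ aᵢ ν` at the incoming velocity gives the same at the outgoing one. Since
`p t - t ν` is constant along a segment of velocity `ν`, the congruence propagates from the origin
through the whole path.

A Hecke chain joins positive multiples `c ν` and `c' μ` of the velocities. Since `ν` and `μ` lie in
one orbit, as do `c ν` and `c' μ`, a `W`-invariant seminorm, on whose kernel `W` acts trivially,
forces `c = c'`, and dividing by `c` gives a chain from `ν` to `μ`.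
-/

theorem IsLinOn.sub_smul_eq {V : Type*} [AddCommGroup V] [Module ℝ V] {p : ℝ → V} {s t u : ℝ}
    {v : V} (h : IsLinOn p s t v) (hu : u ∈ Set.Icc s t) : p u - u • v = p s - s • v := by
  rw [h u hu, sub_smul]
  abel

theorem sub_smul_mem_of_forall_isLinOn {V : Type*} [AddCommGroup V] [Module ℝ V]
    {Λ : AddSubgroup V} {p : ℝ → V} {r : ℕ} {a : ℕ → ℝ} {ν : ℕ → V}
    (hmono : ∀ i < r, a i ≤ a (i + 1)) (hp : ∀ i < r, IsLinOn p (a i) (a (i + 1)) (ν i))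
    (hstart : p (a 0) - a 0 • ν 0 ∈ Λ)
    (hturn : ∀ i, 0 < i → i < r →
      p (a i) - a i • ν (i - 1) ∈ Λ → a i • ν (i - 1) - a i • ν i ∈ Λ) :
    ∀ i, 0 < i → i < r → p (a i) - a i • ν (i - 1) ∈ Λ := by
  have along_segment (i : ℕ) (hi : i < r) : p (a (i + 1)) - a (i + 1) • ν i = p (a i) - a i • ν i :=
    (hp i hi).sub_smul_eq (Set.right_mem_Icc.2 (hmono i hi))
  intro i hi0
  induction i, hi0 using Nat.le_induction with
  | base =>
    intro h1r
    rwa [Nat.sub_self, along_segment 0 (by omega)]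
  | succ i hi0 ih =>
    intro hir
    have hi : i < r := by omega
    rw [Nat.add_sub_cancel, along_segment i hi, ← sub_add_sub_cancel _ (a i • ν (i - 1))]
    exact add_mem (ih hi) (hturn i hi0 hi (ih hi))

namespace CRS

variable {V : Type*} [NormedAddCommGroup V] [InnerProductSpace ℝ V] [FiniteDimensional ℝ V]
  {P : CRS V}

theorem refl_eq_preReflection (α : V →ₗ[ℝ] ℝ) :
    P.refl α = Module.preReflection (P.coroot α) α := rfl

theorem refl_smul (α : V →ₗ[ℝ] ℝ) (c : ℝ) (x : V) : P.refl α (c • x) = c • P.refl α x := by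
  rw [refl_eq_preReflection, map_smul]

theorem refl_refl {α : V →ₗ[ℝ] ℝ} (hα : α ∈ P.R) (x : V) : P.refl α (P.refl α x) = x :=
  Module.involutive_preReflection (P.pairing_self α hα) x

/-! ### Orbits of the Weyl group -/

theorem sameOrbit_self (x : V) : P.SameOrbit x x := ⟨id, ⟨[], by simp⟩, rfl⟩

theorem SameOrbit.refl_right {x y : V} {α : V →ₗ[ℝ] ℝ} (hα : α ∈ P.R) (h : P.SameOrbit x y) :
    P.SameOrbit x (P.refl α y) := by
  obtain ⟨_, ⟨l, hl, rfl⟩, rfl⟩ := h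
  exact ⟨_, ⟨α :: l, List.forall_mem_cons.2 ⟨hα, hl⟩, rfl⟩, rfl⟩

theorem SameOrbit.induction {Q : V → Prop} (hQ : ∀ α ∈ P.R, ∀ x, Q x → Q (P.refl α x))
    {x y : V} (h : P.SameOrbit x y) (hx : Q x) : Q y := by
  obtain ⟨_, ⟨l, hl, rfl⟩, rfl⟩ := h
  induction l with
  | nil => exact hx
  | cons γ l ih =>
    obtain ⟨hγ, hl⟩ := List.forall_mem_cons.1 hl
    exact hQ γ hγ _ (ih hl)

theorem SameOrbit.trans {x y z : V} (hxy : P.SameOrbit x y) (hyz : P.SameOrbit y z) :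
    P.SameOrbit x z :=
  hyz.induction (fun _ hα _ => SameOrbit.refl_right hα) hxy

theorem SameOrbit.symm {x y : V} (h : P.SameOrbit x y) : P.SameOrbit y x := by
  refine h.induction (Q := (P.SameOrbit · x)) (fun α hα z hz => ?_) (sameOrbit_self x)
  have hback : P.SameOrbit (P.refl α z) z := by
    simpa only [refl_refl hα] using (sameOrbit_self (P.refl α z)).refl_right hα
  exact hback.trans hz

variable (P) in
/-- The `W`-invariant seminorm `x ↦ ∑ |β x|`, the sum running over all roots. It serves to compare
the scales of vectors in a common orbit. The norm of `V` cannot be used instead, since a `CRS` does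
not require the reflections to be isometries. -/
def rootSeminorm : Seminorm ℝ V := ∑ β ∈ P.R, (normSeminorm ℝ ℝ).comp β

theorem rootSeminorm_apply (x : V) : P.rootSeminorm x = ∑ β ∈ P.R, |β x| := by
  rw [rootSeminorm, ← FunLike.coeAddMonoidHom_apply, map_sum, Finset.sum_apply]
  rfl

theorem rootSeminorm_eq_zero_iff {x : V} : P.rootSeminorm x = 0 ↔ ∀ β ∈ P.R, β x = 0 := by
  rw [rootSeminorm_apply, Finset.sum_eq_zero_iff_of_nonneg fun β _ => abs_nonneg (β x)]
  simp only [abs_eq_zero]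

theorem rootSeminorm_refl {α : V →ₗ[ℝ] ℝ} (hα : α ∈ P.R) (x : V) :
    P.rootSeminorm (P.refl α x) = P.rootSeminorm x := by
  let precomp := Module.preReflection α (Module.Dual.eval ℝ V (P.coroot α))
  have precomp_mem : ∀ β ∈ P.R, precomp β ∈ P.R := P.reflect_mem α hα
  have precomp_precomp : ∀ β ∈ P.R, precomp (precomp β) = β := fun β _ =>
    Module.involutive_preReflection (f := Module.Dual.eval ℝ V (P.coroot α)) (P.pairing_self α hα) β
  simp only [rootSeminorm_apply]
  refine Finset.sum_nbij' precomp precomp precomp_mem precomp_mem precomp_precomp precomp_precomp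
    fun β _ => congrArg _ ?_
  simp only [refl, precomp, Module.preReflection_apply, Module.Dual.eval_apply, map_sub, map_smul,
    LinearMap.sub_apply, LinearMap.smul_apply, smul_eq_mul, mul_comm]

theorem SameOrbit.rootSeminorm_eq {x y : V} (h : P.SameOrbit x y) :
    P.rootSeminorm y = P.rootSeminorm x :=
  h.induction (Q := (P.rootSeminorm · = P.rootSeminorm x))
    (fun _ hα z hz => (rootSeminorm_refl hα z).trans hz) rfl

theorem SameOrbit.eq_of_rootSeminorm_eq_zero {x y : V} (h : P.SameOrbit x y)
    (hx : P.rootSeminorm x = 0) : y = x := by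
  refine h.induction (Q := (· = x)) (fun α hα z hz => ?_) rfl
  rw [hz, refl, rootSeminorm_eq_zero_iff.1 hx α hα, zero_smul, sub_zero]

theorem SameOrbit.eq_of_smul_smul {x y : V} {c d : ℝ} (hc : 0 < c) (hd : 0 < d) (hx : x ≠ 0)
    (hxy : P.SameOrbit x y) (hcd : P.SameOrbit (c • x) (d • y)) : c = d := by
  have hnorm : d * P.rootSeminorm x = c * P.rootSeminorm x := by
    simpa only [map_smul_eq_mul, Real.norm_of_nonneg hc.le, Real.norm_of_nonneg hd.le,
      hxy.rootSeminorm_eq] using hcd.rootSeminorm_eq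
  by_cases hx0 : P.rootSeminorm x = 0
  · have hcx : P.rootSeminorm (c • x) = 0 := by rw [map_smul_eq_mul, hx0, mul_zero]
    have hdc : d • x = c • x := by
      simpa only [hxy.eq_of_rootSeminorm_eq_zero hx0] using hcd.eq_of_rootSeminorm_eq_zero hcx
    exact (smul_left_injective ℝ hx hdc).symm
  · exact (mul_right_cancel₀ hx0 hnorm).symm

/-! ### The coweight lattice -/

variable (P) in
/-- The coweight lattice `P(R∨)`, bundled as an additive subgroup of `V` so that vectors can be
compared modulo `P(R∨)`. -/
def coweightLattice : AddSubgroup V where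
  carrier := {x | P.IsCoweight x}
  zero_mem' _ _ := ⟨0, by simp⟩
  add_mem' hx hy α hα := by
    obtain ⟨m, hm⟩ := hx α hα
    obtain ⟨n, hn⟩ := hy α hα
    exact ⟨m + n, by rw [map_add, hm, hn, Int.cast_add]⟩
  neg_mem' hx α hα := by
    obtain ⟨m, hm⟩ := hx α hα
    exact ⟨-m, by rw [map_neg, hm, Int.cast_neg]⟩

theorem coroot_mem_coweightLattice {β : V →ₗ[ℝ] ℝ} (hβ : β ∈ P.R) :
    P.coroot β ∈ P.coweightLattice :=
  fun α hα => P.crystal α hα β hβ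

theorem sub_refl_mem_coweightLattice {β : V →ₗ[ℝ] ℝ} (hβ : β ∈ P.R) {x : V}
    (hx : ∃ n : ℤ, β x = n) : x - P.refl β x ∈ P.coweightLattice := by
  obtain ⟨n, hn⟩ := hx
  rw [refl, sub_sub_cancel, hn, Int.cast_smul_eq_zsmul]
  exact zsmul_mem (coroot_mem_coweightLattice hβ) n

theorem IsCoweight.of_sameOrbit {x y : V} (hx : P.IsCoweight x) (h : P.SameOrbit x y) :
    P.IsCoweight y := by
  refine h.induction (fun α hα z hz => ?_) hx
  have hdiff := sub_refl_mem_coweightLattice hα (hz α hα)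
  exact sub_sub_cancel z (P.refl α z) ▸ P.coweightLattice.sub_mem hz hdiff

theorem exists_int_iff_of_sub_mem {β : V →ₗ[ℝ] ℝ} (hβ : β ∈ P.R) {x y : V}
    (hxy : x - y ∈ P.coweightLattice) : (∃ n : ℤ, β x = n) ↔ ∃ n : ℤ, β y = n := by
  obtain ⟨m, hm⟩ := hxy β hβ
  rw [map_sub, sub_eq_iff_eq_add] at hm
  constructor
  · rintro ⟨n, hn⟩
    exact ⟨n - m, by push_cast; linarith⟩
  · rintro ⟨n, hn⟩
    exact ⟨m + n, by rw [hm, hn, Int.cast_add]⟩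

/-! ### Chains -/

section IsChain

variable {m : ℕ} {η : ℕ → V} {β : ℕ → (V →ₗ[ℝ] ℝ)}

theorem IsChain.of_succ (h : P.IsChain (m + 1) η β) : P.IsChain m η β :=
  ⟨fun i hi => h.1 i (by omega), fun i hi => h.2 i (by omega)⟩

theorem IsChain.root_mem (h : P.IsChain m η β) {i : ℕ} (hi : i < m) : β i ∈ P.R :=
  P.Rpos_subset (h.2 i hi).1

theorem IsChain.sameOrbit (h : P.IsChain m η β) : P.SameOrbit (η 0) (η m) := by
  induction m with
  | zero => exact sameOrbit_self _
  | succ m ih =>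
    rw [(h.2 m m.lt_succ_self).2.1]
    exact (ih h.of_succ).refl_right (h.root_mem m.lt_succ_self)

theorem IsChain.smul (h : P.IsChain m η β) {c : ℝ} (hc : 0 < c) :
    P.IsChain m (fun i => c • η i) β := by
  refine ⟨fun i hi => smul_ne_zero hc.ne' (h.1 i hi), fun i hi => ?_⟩
  obtain ⟨hpos, hrefl, hneg⟩ := h.2 i hi
  refine ⟨hpos, by simp only [hrefl, refl_smul], ?_⟩
  rw [map_smul, smul_eq_mul]
  exact mul_neg_of_pos_of_neg hc hneg

theorem IsChain.smul_sub_smul_mem {a : ℝ} (h : P.IsChain m η β)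
    (hint : ∀ i < m, ∃ n : ℤ, β i (a • η i) = n) :
    a • η 0 - a • η m ∈ P.coweightLattice := by
  induction m with
  | zero => rw [sub_self]; exact zero_mem _
  | succ m ih =>
    have hlast := sub_refl_mem_coweightLattice (h.root_mem m.lt_succ_self)
      (hint m m.lt_succ_self)
    rw [refl_smul, ← (h.2 m m.lt_succ_self).2.1] at hlast
    rw [← sub_add_sub_cancel _ (a • η m)]
    exact add_mem (ih h.of_succ fun i hi => hint i (by omega)) hlast

theorem IsChain.forall_exists_int_iff {a : ℝ} {x : V} (h : P.IsChain m η β)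
    (hx : x - a • η 0 ∈ P.coweightLattice) :
    (∀ i < m, ∃ n : ℤ, β i x = n) ↔ ∀ i < m, ∃ n : ℤ, β i (a • η i) = n := by
  induction m with
  | zero => simp only [Nat.not_lt_zero, false_imp_iff, imp_true_iff]
  | succ m ih =>
    rw [Nat.forall_lt_succ_right, Nat.forall_lt_succ_right, ih h.of_succ]
    refine and_congr_right fun hint => exists_int_iff_of_sub_mem (h.root_mem m.lt_succ_self) ?_
    rw [← sub_add_sub_cancel _ (a • η 0)]
    exact add_mem hx (h.of_succ.smul_sub_smul_mem hint)

end IsChain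

theorem chainLengths_subset_chainLengths_smul {c : ℝ} (hc : 0 < c) (x y : V) :
    P.chainLengths x y ⊆ P.chainLengths (c • x) (c • y) := by
  rintro m ⟨η, β, h, rfl, rfl⟩
  exact ⟨_, β, h.smul hc, rfl, rfl⟩

theorem chainLengths_smul {c : ℝ} (hc : 0 < c) (x y : V) :
    P.chainLengths (c • x) (c • y) = P.chainLengths x y := by
  refine (chainLengths_subset_chainLengths_smul hc x y).antisymm' ?_
  simpa only [inv_smul_smul₀ hc.ne'] using
    chainLengths_subset_chainLengths_smul (inv_pos.2 hc) (c • x) (c • y)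

theorem distW_smul_iff {c : ℝ} (hc : 0 < c) {x y : V} {d : ℕ} :
    P.DistW (c • x) (c • y) d ↔ P.DistW x y d := by
  rw [DistW, DistW, chainLengths_smul hc]

/-! ### Littelmann's chains and maximal Hecke chains -/

theorem AChainFor.chainGE {a : ℝ} {ν μ : V} (h : P.AChainFor a ν μ) : P.ChainGE ν μ := by
  obtain ⟨m, η, β, hη, h0, hm, -, -⟩ := h
  exact ⟨m, η, β, hη, h0, hm⟩

theorem AChainFor.smul_sub_smul_mem {a : ℝ} {ν μ : V} (h : P.AChainFor a ν μ) :
    a • ν - a • μ ∈ P.coweightLattice := by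
  obtain ⟨m, η, β, hη, rfl, rfl, hint, -⟩ := h
  exact hη.smul_sub_smul_mem hint

theorem AChainFor.exists_rat_eq {a : ℝ} {ν μ : V} (h : P.AChainFor a ν μ) (hνμ : ν ≠ μ)
    (hν : P.IsCoweight ν) : ∃ q : ℚ, a = q := by
  obtain ⟨m, η, β, hη, rfl, rfl, hint, -⟩ := h
  have hm : 0 < m := Nat.pos_of_ne_zero fun hm => hνμ (by rw [hm])
  obtain ⟨n, hn⟩ := hint 0 hm
  obtain ⟨k, hk⟩ := hν (β 0) (hη.root_mem hm)
  have hk0 : (k : ℝ) ≠ 0 := hk ▸ (hη.2 0 hm).2.2.ne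
  rw [map_smul, smul_eq_mul, hk] at hn
  exact ⟨n / k, by push_cast; exact eq_div_of_mul_eq hk0 hn⟩

variable (P) in
/-- The maximal chain condition at the point `x` for the velocities `ν` and `μ`: there is a
`W`-chain of steps of `dist_W` one, all of whose roots are integral at `x`, from the direction of
`ν` to the direction of `μ`. Directions are encoded as vectors up to independent positive
factors. -/
def MaximalChainAt (x ν μ : V) : Prop :=
  ∃ (s : ℕ) (η : ℕ → V) (β : ℕ → (V →ₗ[ℝ] ℝ)) (c c' : ℝ),
    0 < c ∧ 0 < c' ∧ η 0 = c • ν ∧ η s = c' • μ ∧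
    (∀ j ≤ s, η j ≠ 0) ∧
    ∀ j < s, β j ∈ P.Rpos ∧ (∃ n : ℤ, β j x = (n : ℝ)) ∧
      η (j + 1) = P.refl (β j) (η j) ∧ β j (η j) < 0 ∧
      P.DistW (η j) (η (j + 1)) 1

theorem maximalChainAt_iff_exists_isChain {x ν μ : V} (hνμ : P.SameOrbit ν μ) :
    P.MaximalChainAt x ν μ ↔
      ∃ (m : ℕ) (η : ℕ → V) (β : ℕ → (V →ₗ[ℝ] ℝ)), P.IsChain m η β ∧ η 0 = ν ∧ η m = μ ∧
        (∀ i < m, ∃ n : ℤ, β i x = n) ∧ ∀ i < m, P.DistW (η i) (η (i + 1)) 1 := by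
  constructor
  · rintro ⟨m, η, β, c, d, hc, hd, h0, hm, hne, hstep⟩
    have hη : P.IsChain m η β :=
      ⟨hne, fun i hi => ⟨(hstep i hi).1, (hstep i hi).2.2.1, (hstep i hi).2.2.2.1⟩⟩
    have hcν : c • ν ≠ 0 := h0 ▸ hne 0 m.zero_le
    obtain rfl : c = d :=
      hνμ.eq_of_smul_smul hc hd (right_ne_zero_of_smul hcν) (h0 ▸ hm ▸ hη.sameOrbit)
    have hc' : 0 < c⁻¹ := inv_pos.2 hc
    exact ⟨m, _, β, hη.smul hc', by rw [h0, inv_smul_smul₀ hc.ne'],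
      by rw [hm, inv_smul_smul₀ hc.ne'], fun i hi => (hstep i hi).2.1,
      fun i hi => (distW_smul_iff hc').2 (hstep i hi).2.2.2.2⟩
  · rintro ⟨m, η, β, hη, rfl, rfl, hint, hdist⟩
    exact ⟨m, η, β, 1, 1, one_pos, one_pos, (one_smul _ _).symm, (one_smul _ _).symm, hη.1,
      fun i hi => ⟨(hη.2 i hi).1, hint i hi, (hη.2 i hi).2.1, (hη.2 i hi).2.2, hdist i hi⟩⟩

theorem aChainFor_iff_maximalChainAt {a : ℝ} {x ν μ : V} (hνμ : P.SameOrbit ν μ)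
    (hx : x - a • ν ∈ P.coweightLattice) : P.AChainFor a ν μ ↔ P.MaximalChainAt x ν μ := by
  rw [maximalChainAt_iff_exists_isChain hνμ, AChainFor]
  refine exists_congr fun m => exists_congr fun η => exists_congr fun β =>
    and_congr_right fun hη => and_congr_right fun h0 => and_congr_right fun _ => ?_
  rw [hη.forall_exists_int_iff (h0 ▸ hx)]

theorem forall_aChainFor_iff_forall_maximalChainAt {p : ℝ → V} {r : ℕ} {a : ℕ → ℝ} {ν : ℕ → V}
    (hmono : ∀ i < r, a i ≤ a (i + 1)) (hp : ∀ i < r, IsLinOn p (a i) (a (i + 1)) (ν i))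
    (hstart : p (a 0) - a 0 • ν 0 ∈ P.coweightLattice)
    (hν : ∀ i, 0 < i → i < r → P.SameOrbit (ν (i - 1)) (ν i)) :
    (∀ i, 0 < i → i < r → P.AChainFor (a i) (ν (i - 1)) (ν i)) ↔
      ∀ i, 0 < i → i < r → P.MaximalChainAt (p (a i)) (ν (i - 1)) (ν i) := by
  have chain_iff (i : ℕ) (hi0 : 0 < i) (hir : i < r)
      (hi : p (a i) - a i • ν (i - 1) ∈ P.coweightLattice) :
      P.AChainFor (a i) (ν (i - 1)) (ν i) ↔ P.MaximalChainAt (p (a i)) (ν (i - 1)) (ν i) :=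
    aChainFor_iff_maximalChainAt (hν i hi0 hir) hi
  constructor <;> intro h i hi0 hir
  · refine (chain_iff i hi0 hir ?_).1 (h i hi0 hir)
    exact sub_smul_mem_of_forall_isLinOn hmono hp hstart
      (fun j hj0 hjr _ => (h j hj0 hjr).smul_sub_smul_mem) i hi0 hir
  · refine (chain_iff i hi0 hir ?_).2 (h i hi0 hir)
    exact sub_smul_mem_of_forall_isLinOn hmono hp hstart
      (fun j hj0 hjr hj => ((chain_iff j hj0 hjr hj).2 (h j hj0 hjr)).smul_sub_smul_mem) i hi0 hir

end CRS

/-- A billiard path of Δ-length `lam ∈ Δ ∩ P(R∨)` is an LS path if and only if it is a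
Hecke path satisfying the maximal chain condition at each break point. -/
theorem ls_path_iff_maximal_integral_hecke_path
    {V : Type*} [NormedAddCommGroup V] [InnerProductSpace ℝ V]
    [FiniteDimensional ℝ V] (P : CRS V)
    (lam : V) (hlamΔ : lam ∈ P.chamber) (hlam0 : lam ≠ 0) (hlamwt : P.IsCoweight lam)
    (r : ℕ) (hr : 0 < r) (a : ℕ → ℝ) (ν : ℕ → V)
    (ha0 : a 0 = 0) (har : a r = 1) (hmono : ∀ i < r, a i < a (i + 1))
    (hν : ∀ i < r, P.SameOrbit lam (ν i))
    (hbreak : ∀ i, 0 < i → i < r → ν (i - 1) ≠ ν i)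
    (p : ℝ → V) (hp0 : p 0 = 0)
    (hp : ∀ i < r, IsLinOn p (a i) (a (i + 1)) (ν i)) :
    ((∀ i ≤ r, ∃ q : ℚ, a i = (q : ℝ)) ∧
      (∀ i, i + 1 < r → P.ChainGT (ν i) (ν (i + 1))) ∧
      (∀ i, 0 < i → i < r → P.AChainFor (a i) (ν (i - 1)) (ν i)))
    ↔
    (∀ i, 0 < i → i < r →
      ∃ (s : ℕ) (η : ℕ → V) (β : ℕ → (V →ₗ[ℝ] ℝ)) (c c' : ℝ),
        0 < c ∧ 0 < c' ∧ η 0 = c • ν (i - 1) ∧ η s = c' • ν i ∧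
        (∀ j ≤ s, η j ≠ 0) ∧
        ∀ j < s, β j ∈ P.Rpos ∧ (∃ n : ℤ, β j (p (a i)) = (n : ℝ)) ∧
          η (j + 1) = P.refl (β j) (η j) ∧ β j (η j) < 0 ∧
          P.DistW (η j) (η (j + 1)) 1) := by
  have aChain_iff := CRS.forall_aChainFor_iff_forall_maximalChainAt
    (P := P) (fun i hi => (hmono i hi).le) hp (by simp [ha0, hp0])
    (fun i _ hir => (hν (i - 1) (by omega)).symm.trans (hν i hir))
  refine Iff.trans ⟨fun h => h.2.2, fun hchain => ⟨fun i hir => ?_, fun i hir => ?_, hchain⟩⟩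
    aChain_iff
  · rcases i.eq_zero_or_pos with rfl | hi0
    · exact ⟨0, by rw [ha0, Rat.cast_zero]⟩
    rcases hir.eq_or_lt with rfl | hir
    · exact ⟨1, by rw [har, Rat.cast_one]⟩
    · exact (hchain i hi0 hir).exists_rat_eq (hbreak i hi0 hir)
        (hlamwt.of_sameOrbit (hν (i - 1) (by omega)))
  · exact ⟨(hchain (i + 1) i.succ_pos hir).chainGE, hbreak (i + 1) i.succ_pos hir⟩
end
end

section
/- Let (λ₀, λ₁, …, λ_s) be a W-chain with reflections τ_{β_i} (β_i ∈ R⁺, τ_{β_i}(λ_{i−1}) = λ_i, β_i(λ_{i−1}) < 0), and let a > 0. If β_i(aλ_{i−1}) ∈ ℤ for every i = 1, …, s, then β_i(aλ₀) ∈ ℤ for every i = 1, …, s. -/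
noncomputable section

/-!
Each step of the chain moves `a • λᵢ` by the integer multiple `βᵢ(a • λᵢ)` of a coroot. Hence
`a • λ₀` and `a • λᵢ` are congruent modulo the coroot lattice, on which roots are integral.
-/

theorem mem_subring_bot_iff_exists_eq_intCast {K : Type*} [Ring K] {r : K} :
    r ∈ (⊥ : Subring K) ↔ ∃ n : ℤ, r = n := by
  simp only [Subring.mem_bot, eq_comm]

section Reflections

variable {K M : Type*} [CommRing K] [AddCommGroup M] [Module K M]

theorem sub_eq_sum_of_preReflection {x v : ℕ → M} {f : ℕ → Module.Dual K M} {n : ℕ}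
    (hx : ∀ i < n, x (i + 1) = Module.preReflection (v i) (f i) (x i)) :
    x 0 - x n = ∑ i ∈ Finset.range n, f i (x i) • v i := by
  rw [← Finset.sum_range_sub' x]
  refine Finset.sum_congr rfl fun i hi => ?_
  rw [hx i (Finset.mem_range.mp hi), Module.preReflection_apply, sub_sub_cancel]

theorem chain_integrality_at_start_general (S : Subring K) {s : ℕ} {x v : ℕ → M}
    {f : ℕ → Module.Dual K M}
    (hpairing : ∀ i < s, ∀ j < i, f i (v j) ∈ S)
    (hx : ∀ i < s, x (i + 1) = Module.preReflection (v i) (f i) (x i))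
    (hint : ∀ i < s, f i (x i) ∈ S) :
    ∀ i < s, f i (x 0) ∈ S := by
  intro i hi
  have hsum : f i (x 0) = f i (x i) + ∑ j ∈ Finset.range i, f j (x j) * f i (v j) := by
    rw [← sub_eq_iff_eq_add', ← map_sub,
      sub_eq_sum_of_preReflection fun j hj => hx j (hj.trans hi), map_sum]
    simp only [map_smul, smul_eq_mul]
  rw [hsum]
  refine S.add_mem (hint i hi) (S.sum_mem fun j hj => ?_)
  have hji : j < i := Finset.mem_range.mp hj
  exact S.mul_mem (hint j (hji.trans hi)) (hpairing i hi j hji)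

end Reflections

namespace CRS

variable {V : Type*} [NormedAddCommGroup V] [InnerProductSpace ℝ V] [FiniteDimensional ℝ V]
  {P : CRS V}

theorem smul_refl (a : ℝ) (α : V →ₗ[ℝ] ℝ) (x : V) :
    a • P.refl α x = Module.preReflection (P.coroot α) α (a • x) := by
  rw [map_smul, Module.preReflection_apply, refl]

theorem IsChain.pairing_mem_subring_bot {s : ℕ} {η : ℕ → V} {β : ℕ → (V →ₗ[ℝ] ℝ)}
    (h : P.IsChain s η β) {i j : ℕ} (hi : i < s) (hj : j < s) :
    β i (P.coroot (β j)) ∈ (⊥ : Subring ℝ) :=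
  mem_subring_bot_iff_exists_eq_intCast.mpr <|
    P.crystal _ (P.Rpos_subset (h.2 i hi).1) _ (P.Rpos_subset (h.2 j hj).1)

end CRS

/-- If all roots of a `W`-chain are integral along the chain scaled by `a`, then they are
all integral at the scaled initial point `a • λ₀`. -/
theorem chain_integrality_at_start
    {V : Type*} [NormedAddCommGroup V] [InnerProductSpace ℝ V]
    [FiniteDimensional ℝ V] (P : CRS V)
    (a : ℝ) (ha : 0 < a) (s : ℕ) (η : ℕ → V) (β : ℕ → (V →ₗ[ℝ] ℝ))
    (hchain : P.IsChain s η β)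
    (hint : ∀ i < s, ∃ n : ℤ, β i (a • η i) = (n : ℝ)) :
    ∀ i < s, ∃ n : ℤ, β i (a • η 0) = (n : ℝ) := by
  simp only [← mem_subring_bot_iff_exists_eq_intCast] at hint ⊢
  exact chain_integrality_at_start_general (x := fun i => a • η i) ⊥
    (fun i hi j hj => hchain.pairing_mem_subring_bot hi (hj.trans hi))
    (fun i hi => by rw [(hchain.2 i hi).2.1, CRS.smul_refl]) hint
end
end

section
/- Let Φ′ ⊆ Φ and let W′ ≤ W be the subgroup generated by {τ_α : α ∈ Φ′}. For any two nonzero vectors α, δ ∈ V the following are equivalent: (1) there exist nonzero β, γ with α ≥_{W′} β, β ∼_W γ and γ ≥_{W′} δ; (2) there exists a nonzero β with α ≥_{W′} β and β ∼_W δ; (3) there exists a nonzero γ with α ∼_W γ and γ ≥_{W′} δ. -/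
noncomputable section

/-!
A root `β` never takes opposite signs at two vectors `x`, `y` of a common chamber, and `τ_β x`,
`τ_β y` again lie in a common chamber. Hence if `τ_β` gives a chain step starting (or ending) at
one of the two vectors, it either fixes the other or gives a chain step starting (or ending) there.
So a single chain step can be moved across `∼_W`, and by induction so can a whole chain. Moving the
second chain to the left of `∼_W` in `α ≥ β ∼ γ ≥ δ` merges it with the first one.
-/

open Relation

namespace CRS

variable {V : Type*} [NormedAddCommGroup V] [InnerProductSpace ℝ V]
  [FiniteDimensional ℝ V] {P : CRS V} {S : Set (V →ₗ[ℝ] ℝ)} {Φ' : Finset (V →ₗ[ℝ] ℝ)}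
  {β : V →ₗ[ℝ] ℝ} {w : V → V} {x y z : V}

theorem apply_refl_self (hβ : β ∈ P.R) (x : V) : β (P.refl β x) = -β x := by
  simp only [refl, map_sub, map_smul, smul_eq_mul, P.pairing_self β hβ]
  ring

theorem refl_involutive (hβ : β ∈ P.R) : Function.Involutive (P.refl β) := fun x => by
  calc P.refl β (P.refl β x) = P.refl β x - β (P.refl β x) • P.coroot β := rfl
    _ = x - β x • P.coroot β + β x • P.coroot β := by
      rw [apply_refl_self hβ, neg_smul, sub_neg_eq_add, refl]
    _ = x := sub_add_cancel _ _

theorem refl_eq_self (h : β x = 0) : P.refl β x = x := by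
  simp [refl, h]

theorem refl_eq_zero_iff (hβ : β ∈ P.R) : P.refl β x = 0 ↔ x = 0 :=
  (refl_involutive hβ).injective.eq_iff' (refl_eq_self (map_zero β))

theorem isWeyl_id : P.IsWeyl id :=
  ⟨[], by simp, rfl⟩

theorem IsWeyl.refl_comp (hβ : β ∈ P.R) (hw : P.IsWeyl w) : P.IsWeyl (P.refl β ∘ w) := by
  obtain ⟨l, hl, rfl⟩ := hw
  exact ⟨β :: l, List.forall_mem_cons.2 ⟨hβ, hl⟩, rfl⟩

@[elab_as_elim]
theorem IsWeyl.induction {motive : (w : V → V) → P.IsWeyl w → Prop} (id : motive id isWeyl_id)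
    (refl_comp : ∀ β (hβ : β ∈ P.R) w (hw : P.IsWeyl w),
      motive w hw → motive (P.refl β ∘ w) (hw.refl_comp hβ))
    (hw : P.IsWeyl w) : motive w hw := by
  obtain ⟨l, hl, rfl⟩ := hw
  induction l with
  | nil => exact id
  | cons β l ih =>
    obtain ⟨hβ, hl⟩ := List.forall_mem_cons.1 hl
    exact refl_comp β hβ _ ⟨l, hl, rfl⟩ (ih hl)

theorem IsWeyl.comp_refl (hw : P.IsWeyl w) (hβ : β ∈ P.R) : P.IsWeyl (w ∘ P.refl β) := by
  induction hw using IsWeyl.induction with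
  | id => exact isWeyl_id.refl_comp hβ
  | refl_comp γ hγ w _ ih => exact ih.refl_comp hγ

theorem IsWeyl.exists_root_comp_eq (hw : P.IsWeyl w) (hβ : β ∈ P.R) :
    ∃ γ ∈ P.R, ∀ x, γ (w x) = β x := by
  induction hw using IsWeyl.induction with
  | id => exact ⟨β, hβ, fun _ => rfl⟩
  | refl_comp α hα w _ ih =>
    obtain ⟨γ, hγ, h⟩ := ih
    refine ⟨γ - γ (P.coroot α) • α, P.reflect_mem α hα γ hγ, fun x => ?_⟩
    calc (γ - γ (P.coroot α) • α) (P.refl α (w x))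
        = γ (P.refl α (w x)) - γ (P.coroot α) * α (P.refl α (w x)) := rfl
      _ = γ (w x) - α (w x) * γ (P.coroot α) - γ (P.coroot α) * -α (w x) := by
        rw [apply_refl_self hα, refl, map_sub, map_smul, smul_eq_mul]
      _ = γ (w x) := by ring
      _ = β x := h x

theorem mul_nonneg_of_mem_chamber (hβ : β ∈ P.R) (hx : x ∈ P.chamber) (hy : y ∈ P.chamber) :
    0 ≤ β x * β y := by
  by_cases hpos : β ∈ P.Rpos
  · exact mul_nonneg (hx β hpos) (hy β hpos)
  · have hneg : -β ∈ P.Rpos := by_contra fun h => hpos ((P.pos_iff β hβ).2 h)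
    simpa using mul_nonneg (hx _ hneg) (hy _ hneg)

namespace SameChamber

theorem symm (h : P.SameChamber x y) : P.SameChamber y x :=
  let ⟨w, hw, hx, hy⟩ := h
  ⟨w, hw, hy, hx⟩

theorem map_refl (h : P.SameChamber x y) (hβ : β ∈ P.R) :
    P.SameChamber (P.refl β x) (P.refl β y) := by
  obtain ⟨w, hw, hx, hy⟩ := h
  refine ⟨w ∘ P.refl β, hw.comp_refl hβ, ?_, ?_⟩ <;>
    rwa [Function.comp_apply, refl_involutive hβ]

theorem root_mul_nonneg (h : P.SameChamber x y) (hβ : β ∈ P.R) : 0 ≤ β x * β y := by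
  obtain ⟨w, hw, hx, hy⟩ := h
  obtain ⟨γ, hγ, hγβ⟩ := hw.exists_root_comp_eq hβ
  simpa only [hγβ] using mul_nonneg_of_mem_chamber hγ hx hy

end SameChamber

/-- One step of a chain whose reflecting roots are taken from the set `S`: the relation
`τ_β(x) = y` and `β(x) < 0` for some `β ∈ S`. Its reflexive transitive closure is the relation
`≥` of the paper, up to the requirement that the vectors be nonzero. -/
def ChainStep (P : CRS V) (S : Set (V →ₗ[ℝ] ℝ)) (x y : V) : Prop :=
  ∃ β ∈ S, P.refl β x = y ∧ β x < 0

theorem reflTransGen_chainStep_refl (hβ : β ∈ S) (h : β x ≤ 0) :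
    ReflTransGen (P.ChainStep S) x (P.refl β x) := by
  rcases h.lt_or_eq with hlt | h_zero
  · exact .single ⟨β, hβ, rfl, hlt⟩
  · rw [refl_eq_self h_zero]

theorem eq_zero_iff_of_reflTransGen_chainStep (hS : S ⊆ P.R)
    (h : ReflTransGen (P.ChainStep S) x y) : x = 0 ↔ y = 0 := by
  induction h with
  | refl => rfl
  | tail _ hstep ih =>
    obtain ⟨β, hβ, rfl, -⟩ := hstep
    rw [ih, refl_eq_zero_iff (hS hβ)]

namespace SameChamber

theorem exists_of_chainStep_left (hS : S ⊆ P.R) (hxy : P.ChainStep S x y)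
    (hyz : P.SameChamber y z) :
    ∃ y', P.SameChamber x y' ∧ ReflTransGen (P.ChainStep S) y' z := by
  obtain ⟨β, hβ, rfl, hlt⟩ := hxy
  have hx : P.SameChamber x (P.refl β z) := by
    simpa only [refl_involutive (hS hβ) x] using hyz.map_refl (hS hβ)
  have hle : β (P.refl β z) ≤ 0 := nonpos_of_mul_nonneg_right (hx.root_mul_nonneg (hS hβ)) hlt
  refine ⟨P.refl β z, hx, ?_⟩
  simpa only [refl_involutive (hS hβ) z] using reflTransGen_chainStep_refl (P := P) hβ hle

theorem exists_of_chainStep_right (hS : S ⊆ P.R) (hxy : P.SameChamber x y)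
    (hyz : P.ChainStep S y z) :
    ∃ y', ReflTransGen (P.ChainStep S) x y' ∧ P.SameChamber y' z := by
  obtain ⟨β, hβ, rfl, hlt⟩ := hyz
  have hle : β x ≤ 0 := nonpos_of_mul_nonneg_right (hxy.symm.root_mul_nonneg (hS hβ)) hlt
  exact ⟨P.refl β x, reflTransGen_chainStep_refl hβ hle, hxy.map_refl (hS hβ)⟩

theorem exists_of_reflTransGen_left (hS : S ⊆ P.R) (hxy : ReflTransGen (P.ChainStep S) x y)
    (hyz : P.SameChamber y z) :
    ∃ y', P.SameChamber x y' ∧ ReflTransGen (P.ChainStep S) y' z := by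
  induction hxy using ReflTransGen.head_induction_on with
  | refl => exact ⟨z, hyz, .refl⟩
  | head hstep _ ih =>
    obtain ⟨u, hu, huz⟩ := ih
    obtain ⟨v, hv, hvu⟩ := exists_of_chainStep_left hS hstep hu
    exact ⟨v, hv, hvu.trans huz⟩

theorem exists_of_reflTransGen_right (hS : S ⊆ P.R) (hxy : P.SameChamber x y)
    (hyz : ReflTransGen (P.ChainStep S) y z) :
    ∃ y', ReflTransGen (P.ChainStep S) x y' ∧ P.SameChamber y' z := by
  induction hyz with
  | refl => exact ⟨x, .refl, hxy⟩
  | tail _ hstep ih =>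
    obtain ⟨u, hxu, hu⟩ := ih
    obtain ⟨v, huv, hv⟩ := exists_of_chainStep_right hS hu hstep
    exact ⟨v, hxu.trans huv, hv⟩

end SameChamber

/-- The reflecting roots admitted in a `W′`-chain: the positive roots `β` with `τ_β ∈ W′`. -/
def subPosRoots (P : CRS V) (Φ' : Finset (V →ₗ[ℝ] ℝ)) : Set (V →ₗ[ℝ] ℝ) :=
  {β | β ∈ P.Rpos ∧ P.IsWeylSub Φ' (P.refl β)}

theorem subPosRoots_subset : P.subPosRoots Φ' ⊆ P.R :=
  fun _ hβ => P.Rpos_subset hβ.1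

namespace ChainGESub

theorem rfl (hx : x ≠ 0) : P.ChainGESub Φ' x x :=
  ⟨0, fun _ => x, fun _ => 0, ⟨fun _ _ => hx, by simp⟩, by simp⟩

theorem head (hx : x ≠ 0) (hxy : P.ChainStep (P.subPosRoots Φ') x y)
    (hyz : P.ChainGESub Φ' y z) : P.ChainGESub Φ' x z := by
  obtain ⟨γ, ⟨hγ, hγ_sub⟩, hy, hlt⟩ := hxy
  obtain ⟨m, η, β, ⟨hη, hstep⟩, h_start, h_end⟩ := hyz
  refine ⟨m + 1, fun | 0 => x | i + 1 => η i, fun | 0 => γ | i + 1 => β i, ⟨?_, ?_⟩,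
    Eq.refl x, h_end⟩
  · rintro (_ | i) hi
    · exact hx
    · exact hη i (Nat.le_of_succ_le_succ hi)
  · rintro (_ | i) hi
    · exact ⟨hγ, hγ_sub, h_start.trans hy.symm, hlt⟩
    · exact hstep i (Nat.lt_of_succ_lt_succ hi)

end ChainGESub

theorem chainGESub_iff :
    P.ChainGESub Φ' x y ↔ x ≠ 0 ∧ ReflTransGen (P.ChainStep (P.subPosRoots Φ')) x y := by
  constructor
  · rintro ⟨m, η, β, ⟨hη, hstep⟩, rfl, rfl⟩
    have hchain : ReflTransGen (fun i j => P.ChainStep (P.subPosRoots Φ') (η i) (η j)) 0 m :=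
      reflTransGen_of_succ_of_le _ (fun i hi => by
        obtain ⟨hβ, hβ_sub, hη_succ, hlt⟩ := hstep i hi.2
        exact ⟨β i, ⟨hβ, hβ_sub⟩, hη_succ.symm, hlt⟩) m.zero_le
    exact ⟨hη 0 m.zero_le, hchain.lift η fun _ _ => id⟩
  · rintro ⟨hx, hxy⟩
    induction hxy using ReflTransGen.head_induction_on with
    | refl => exact .rfl hx
    | head hstep _ ih =>
      have hzero := eq_zero_iff_of_reflTransGen_chainStep subPosRoots_subset (.single hstep)
      exact .head hx hstep (ih (hzero.not.1 hx))

theorem chainGESub_iff_of_ne_zero_left (hx : x ≠ 0) :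
    P.ChainGESub Φ' x y ↔ ReflTransGen (P.ChainStep (P.subPosRoots Φ')) x y :=
  chainGESub_iff.trans (and_iff_right hx)

theorem chainGESub_iff_of_ne_zero_right (hy : y ≠ 0) :
    P.ChainGESub Φ' x y ↔ ReflTransGen (P.ChainStep (P.subPosRoots Φ')) x y :=
  chainGESub_iff.trans <| and_iff_right_of_imp fun h =>
    (eq_zero_iff_of_reflTransGen_chainStep subPosRoots_subset h).not.2 hy

end CRS

theorem gtrsim_tfae_general
    {V : Type*} [NormedAddCommGroup V] [InnerProductSpace ℝ V]
    [FiniteDimensional ℝ V] (P : CRS V)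
    {S : Set (V →ₗ[ℝ] ℝ)} (hS : S ⊆ P.R) {α δ : V} (hα : α ≠ 0) (hδ : δ ≠ 0) :
    ((∃ b c : V, b ≠ 0 ∧ c ≠ 0 ∧ ReflTransGen (P.ChainStep S) α b ∧
        P.SameChamber b c ∧ ReflTransGen (P.ChainStep S) c δ) ↔
      (∃ b : V, b ≠ 0 ∧ ReflTransGen (P.ChainStep S) α b ∧ P.SameChamber b δ)) ∧
    ((∃ b : V, b ≠ 0 ∧ ReflTransGen (P.ChainStep S) α b ∧ P.SameChamber b δ) ↔
      (∃ c : V, c ≠ 0 ∧ P.SameChamber α c ∧ ReflTransGen (P.ChainStep S) c δ)) := by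
  have ne_zero_of_left {b : V} (h : ReflTransGen (P.ChainStep S) α b) : b ≠ 0 :=
    (CRS.eq_zero_iff_of_reflTransGen_chainStep hS h).not.1 hα
  have ne_zero_of_right {c : V} (h : ReflTransGen (P.ChainStep S) c δ) : c ≠ 0 :=
    (CRS.eq_zero_iff_of_reflTransGen_chainStep hS h).not.2 hδ
  refine ⟨⟨?_, ?_⟩, ⟨?_, ?_⟩⟩
  · rintro ⟨b, c, -, -, hαb, hbc, hcδ⟩
    obtain ⟨b', hbb', hb'δ⟩ := hbc.exists_of_reflTransGen_right hS hcδ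
    exact ⟨b', ne_zero_of_left (hαb.trans hbb'), hαb.trans hbb', hb'δ⟩
  · rintro ⟨b, hb, hαb, hbδ⟩
    exact ⟨b, δ, hb, hδ, hαb, hbδ, .refl⟩
  · rintro ⟨b, -, hαb, hbδ⟩
    obtain ⟨c, hαc, hcδ⟩ := hbδ.exists_of_reflTransGen_left hS hαb
    exact ⟨c, ne_zero_of_right hcδ, hαc, hcδ⟩
  · rintro ⟨c, -, hαc, hcδ⟩
    obtain ⟨b, hαb, hbδ⟩ := hαc.exists_of_reflTransGen_right hS hcδ
    exact ⟨b, ne_zero_of_left hαb, hαb, hbδ⟩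

/-- The three forms of the relation `α ≳_{W′} δ` are equivalent. -/
theorem gtrsim_tfae
    {V : Type*} [NormedAddCommGroup V] [InnerProductSpace ℝ V]
    [FiniteDimensional ℝ V] (P : CRS V)
    (Φ' : Finset (V →ₗ[ℝ] ℝ)) (hΦ' : Φ' ⊆ P.simple)
    (α δ : V) (hα : α ≠ 0) (hδ : δ ≠ 0) :
    ((∃ b c : V, b ≠ 0 ∧ c ≠ 0 ∧
        P.ChainGESub Φ' α b ∧ P.SameChamber b c ∧ P.ChainGESub Φ' c δ) ↔
      (∃ b : V, b ≠ 0 ∧ P.ChainGESub Φ' α b ∧ P.SameChamber b δ)) ∧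
    ((∃ b : V, b ≠ 0 ∧ P.ChainGESub Φ' α b ∧ P.SameChamber b δ) ↔
      (∃ c : V, c ≠ 0 ∧ P.SameChamber α c ∧ P.ChainGESub Φ' c δ)) := by
  simpa only [CRS.chainGESub_iff_of_ne_zero_left hα, CRS.chainGESub_iff_of_ne_zero_right hδ]
    using gtrsim_tfae_general P CRS.subPosRoots_subset hα hδ
end
end

section
/- Let R be the root system of type A₂ in V = ℝ², with simple roots α, β and fundamental coweights ϖ₁, ϖ₂ determined by α(ϖ₁) = β(ϖ₂) = 1, α(ϖ₂) = β(ϖ₁) = 0. Define p ∈ 𝒫 by p(t) = −t(ϖ₁ + ϖ₂) for t ∈ [0, 1/2] and p(t) = (t − 1)(ϖ₁ + ϖ₂) for t ∈ [1/2, 1]. Then p is a Hecke path of Δ-length ϖ₁ + ϖ₂ with p(1) = 0 ∈ P(R∨), and yet min_{t ∈ [0,1]} α(p(t)) = −1/2 ∉ ℤ; hence there exists a Hecke path p with p(1) ∈ P(R∨) which does not belong to 𝒫_ℤ = {p ∈ 𝒫 : min_t α(p(t)) ∈ ℤ for every simple root α}. -/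
noncomputable section

/-!
The path `zigzag γ∨` runs to `-γ∨ / 2` and turns around there. At the turning point `γ` takes
the integral value `-1`, so the reflection `τ_γ`, which takes the incoming velocity `-γ∨` to the
outgoing velocity `γ∨`, is available in the stabilizer: the path is Hecke. A simple root `α`
with `α(γ∨) ≥ 0`, however, has minimum `-α(γ∨) / 2` along the path, which is not an integer as
soon as `α(γ∨)` is odd. In type `A₂` the coroot of the highest root is `ϖ₁ + ϖ₂`, on which both
simple roots take the value `1`.
-/

theorem eq_sum_apply_smul_of_biorthogonal {K E ι : Type*} [Field K] [AddCommGroup E] [Module K E]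
    [FiniteDimensional K E] [Fintype ι] [DecidableEq ι]
    (hcard : Module.finrank K E = Fintype.card ι) {f : ι → E →ₗ[K] K} {e : ι → E}
    (hfe : ∀ i j, f i (e j) = if i = j then 1 else 0) (x : E) :
    x = ∑ j, f j x • e j := by
  have hcoord (c : ι → K) : LinearMap.pi f (∑ j, c j • e j) = c := by
    ext i
    simp [hfe]
  have hinj : Function.Injective (LinearMap.pi f) :=
    (LinearMap.injective_iff_surjective_of_finrank_eq_finrank (by simp [hcard])).2
      fun c => ⟨_, hcoord c⟩
  exact hinj (hcoord fun j => f j x).symm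

theorem not_exists_int_eq_neg_half_of_odd {n : ℤ} (hn : Odd n) :
    ¬ ∃ m : ℤ, -((n : ℝ) / 2) = m := by
  rintro ⟨m, hm⟩
  have hnm : n = -m + -m := by
    have : (n : ℝ) = -m + -m := by linarith
    exact_mod_cast this
  exact (Int.not_even_iff_odd.2 hn) ⟨-m, hnm⟩

section Zigzag

variable {E : Type*} [AddCommGroup E] [Module ℝ E] (v : E) {t : ℝ}

theorem zigzag_of_le_half (ht : t ≤ 1 / 2) : zigzag v t = (-t) • v :=
  if_pos ht

theorem zigzag_of_half_le (ht : 1 / 2 ≤ t) : zigzag v t = (t - 1) • v := by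
  rcases ht.eq_or_lt with rfl | ht
  · rw [zigzag_of_le_half v le_rfl]
    norm_num
  · exact if_neg ht.not_ge

theorem zigzag_eq_abs_smul (t : ℝ) : zigzag v t = (|t - 1 / 2| - 1 / 2) • v := by
  rcases le_total t (1 / 2) with ht | ht
  · rw [zigzag_of_le_half v ht, abs_of_nonpos (sub_nonpos.2 ht)]
    ring_nf
  · rw [zigzag_of_half_le v ht, abs_of_nonneg (sub_nonneg.2 ht)]
    ring_nf

theorem zigzag_zero : zigzag v 0 = 0 := by
  simp [zigzag_of_le_half]

theorem zigzag_one : zigzag v 1 = 0 := by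
  rw [zigzag_of_half_le v (by norm_num), sub_self, zero_smul]

theorem isLinOn_zigzag_left : IsLinOn (zigzag v) 0 (1 / 2) (-v) := by
  intro u hu
  rw [zigzag_of_le_half v hu.2, zigzag_zero]
  module

theorem isLinOn_zigzag_right : IsLinOn (zigzag v) (1 / 2) 1 v := by
  intro u hu
  rw [zigzag_of_half_le v hu.1, zigzag_of_half_le v le_rfl]
  module

theorem plOn_zigzag :
    PLOn (zigzag v) 0 1 2 (fun i => (i : ℝ) / 2) (fun i => if i = 0 then -v else v) := by
  refine ⟨by simp, by simp, fun i _ => by push_cast; linarith, fun i hi => ?_⟩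
  interval_cases i
  · simpa using isLinOn_zigzag_left v
  · simpa using isLinOn_zigzag_right v

theorem isLeast_apply_zigzag (f : E →ₗ[ℝ] ℝ) (hfv : 0 ≤ f v) :
    IsLeast {y : ℝ | ∃ t ∈ Set.Icc (0 : ℝ) 1, y = f (zigzag v t)} (-(f v / 2)) := by
  have happly (t : ℝ) : f (zigzag v t) = (|t - 1 / 2| - 1 / 2) * f v := by
    rw [zigzag_eq_abs_smul, map_smul, smul_eq_mul]
  constructor
  · refine ⟨1 / 2, by norm_num, ?_⟩
    rw [happly, sub_self, abs_zero]
    ring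
  · rintro _ ⟨t, -, rfl⟩
    rw [happly]
    linarith [mul_nonneg (abs_nonneg (t - 1 / 2)) hfv]

end Zigzag

section ZigzagDeriv

variable {E : Type*} [NormedAddCommGroup E] [NormedSpace ℝ E] (v : E) {t : ℝ}

theorem hasDerivWithinAt_zigzag_Iic (ht : t ≤ 1 / 2) :
    HasDerivWithinAt (zigzag v) (-v) (Set.Iic (1 / 2)) t := by
  have hline : HasDerivAt (fun s : ℝ => (-s) • v) (-v) t := by
    simpa using (hasDerivAt_id t).neg.smul_const v
  exact hline.hasDerivWithinAt.congr (fun _ hs => zigzag_of_le_half v hs) (zigzag_of_le_half v ht)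

theorem hasDerivWithinAt_zigzag_Ici (ht : 1 / 2 ≤ t) :
    HasDerivWithinAt (zigzag v) v (Set.Ici (1 / 2)) t := by
  have hline : HasDerivAt (fun s : ℝ => (s - 1) • v) v t := by
    simpa using ((hasDerivAt_id t).sub_const 1).smul_const v
  exact hline.hasDerivWithinAt.congr (fun _ hs => zigzag_of_half_le v hs) (zigzag_of_half_le v ht)

end ZigzagDeriv

namespace CRS

variable {V : Type*} [NormedAddCommGroup V] [InnerProductSpace ℝ V]
  [FiniteDimensional ℝ V] {P : CRS V} {γ : V →ₗ[ℝ] ℝ} {p : ℝ → V} {u v w x : V} {t : ℝ}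

theorem refl_neg (P : CRS V) (γ : V →ₗ[ℝ] ℝ) (v : V) : P.refl γ (-v) = -P.refl γ v := by
  simp only [refl, map_neg]
  module

theorem apply_refl (hγ : γ ∈ P.R) (v : V) : γ (P.refl γ v) = -γ v := by
  simp only [refl, map_sub, map_smul, smul_eq_mul, P.pairing_self γ hγ]
  ring

theorem refl_neg_coroot (hγ : γ ∈ P.R) : P.refl γ (-P.coroot γ) = P.coroot γ := by
  simp only [refl, map_neg, P.pairing_self γ hγ]
  module

theorem IsWeyl.map_neg {g : V → V} (hg : P.IsWeyl g) (v : V) : g (-v) = -g v := by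
  obtain ⟨l, -, rfl⟩ := hg
  induction l with
  | nil => rfl
  | cons γ l ih => simp only [List.foldr_cons, Function.comp_apply, ih, refl_neg]

theorem SameOrbit.refl (P : CRS V) (v : V) : P.SameOrbit v v :=
  ⟨id, ⟨[], by simp, rfl⟩, rfl⟩

theorem SameOrbit.refl_right_s19 (h : P.SameOrbit v u) (hγ : γ ∈ P.R) :
    P.SameOrbit v (P.refl γ u) := by
  obtain ⟨_, ⟨l, hl, rfl⟩, rfl⟩ := h
  exact ⟨_, ⟨γ :: l, List.forall_mem_cons.2 ⟨hγ, hl⟩, rfl⟩, rfl⟩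

theorem SameOrbit.neg (h : P.SameOrbit v u) : P.SameOrbit (-v) (-u) := by
  obtain ⟨g, hg, rfl⟩ := h
  exact ⟨g, hg, hg.map_neg v⟩

theorem ChainGEAt.refl (P : CRS V) (x : V) (hv : v ≠ 0) : P.ChainGEAt x v v :=
  ⟨0, fun _ => v, 0, ⟨fun _ _ => hv, fun _ hi => absurd hi (Nat.not_lt_zero _)⟩, rfl, rfl⟩

theorem chainGEAt_refl (hγ : γ ∈ P.Rpos) (hx : ∃ n : ℤ, γ x = n) (hv : γ v < 0) :
    P.ChainGEAt x v (P.refl γ v) := by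
  have hv₀ : v ≠ 0 := by
    rintro rfl
    simp at hv
  have hrefl₀ : P.refl γ v ≠ 0 := by
    intro h
    have := apply_refl (P.Rpos_subset hγ) v
    rw [h, map_zero] at this
    linarith
  refine ⟨1, fun i => (P.refl γ)^[i] v, fun _ => γ, ⟨fun i hi => ?_, fun i hi => ?_⟩, rfl, rfl⟩
  · interval_cases i
    exacts [hv₀, hrefl₀]
  · obtain rfl : i = 0 := Nat.lt_one_iff.1 hi
    exact ⟨hγ, hx, rfl, hv⟩

theorem ChainGEAt.right_ne_zero (h : P.ChainGEAt x v u) : u ≠ 0 := by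
  obtain ⟨m, η, β, hchain, rfl, rfl⟩ := h
  exact hchain.1 m le_rfl

theorem ChainGEAt.sameOrbit (h : P.ChainGEAt x v u) : P.SameOrbit v u := by
  obtain ⟨m, η, β, ⟨-, hstep⟩, rfl, rfl⟩ := h
  have hvertex : ∀ i ≤ m, P.SameOrbit (η 0) (η i) := by
    intro i
    induction i with
    | zero => exact fun _ => .refl P _
    | succ i ih =>
      intro hi
      obtain ⟨hβ, -, hη, -⟩ := hstep i hi
      exact hη ▸ (ih (Nat.le_of_succ_le hi)).refl_right_s19 (P.Rpos_subset hβ)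
  exact hvertex m le_rfl

theorem chainGEAt_of_hasDerivAt (P : CRS V) (hp : HasDerivAt p v t) (hv : v ≠ 0)
    (hu : HasDerivWithinAt p u (Set.Iic t) t) (hw : HasDerivWithinAt p w (Set.Ici t) t) :
    P.ChainGEAt (p t) u w := by
  obtain rfl := (uniqueDiffWithinAt_Iic t).eq_deriv _ hu hp.hasDerivWithinAt
  obtain rfl := (uniqueDiffWithinAt_Ici t).eq_deriv _ hw hp.hasDerivWithinAt
  exact .refl P _ hv

theorem billiardOn_zigzag (hv : P.SameOrbit (-v) v) : P.BilliardOn (zigzag v) 0 1 := by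
  have hv' : P.SameOrbit v (-v) := by simpa using hv.neg
  refine ⟨2, _, _, two_pos, plOn_zigzag v, fun i j _ _ => ?_⟩
  split_ifs
  exacts [.refl P _, hv, hv', .refl P _]

theorem deltaLenOn_zigzag (hv : v ∈ P.chamber) (horbit : P.SameOrbit (-v) v) :
    P.DeltaLenOn (zigzag v) 0 1 v := by
  refine ⟨2, _, _, fun _ => v, two_pos, plOn_zigzag v, fun i _ => ⟨hv, ?_⟩, ?_⟩
  · dsimp only
    split_ifs
    exacts [horbit, .refl P v]
  · rw [Finset.sum_range_succ, Finset.sum_range_one]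
    push_cast
    module

theorem isHeckePath_zigzag (h : P.ChainGEAt (zigzag v (1 / 2)) (-v) v) :
    P.IsHeckePath (zigzag v) := by
  refine ⟨billiardOn_zigzag h.sameOrbit, fun t _ vm vp hm hp => ?_⟩
  rcases lt_trichotomy t (1 / 2) with ht | rfl | ht
  · exact chainGEAt_of_hasDerivAt P
      ((hasDerivWithinAt_zigzag_Iic v ht.le).hasDerivAt (Iic_mem_nhds ht))
      (neg_ne_zero.2 h.right_ne_zero) hm hp
  · obtain rfl := (uniqueDiffWithinAt_Iic _).eq_deriv _ hm (hasDerivWithinAt_zigzag_Iic v le_rfl)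
    obtain rfl := (uniqueDiffWithinAt_Ici _).eq_deriv _ hp (hasDerivWithinAt_zigzag_Ici v le_rfl)
    exact h
  · exact chainGEAt_of_hasDerivAt P
      ((hasDerivWithinAt_zigzag_Ici v ht.le).hasDerivAt (Ici_mem_nhds ht))
      h.right_ne_zero hm hp

theorem chainGEAt_zigzag_coroot (hγ : γ ∈ P.Rpos) :
    P.ChainGEAt (zigzag (P.coroot γ) (1 / 2)) (-P.coroot γ) (P.coroot γ) := by
  have hγR := P.Rpos_subset hγ
  have hpair := P.pairing_self γ hγR
  have hturn : γ (zigzag (P.coroot γ) (1 / 2)) = (-1 : ℤ) := by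
    rw [zigzag_of_le_half _ le_rfl, map_smul, hpair]
    norm_num
  have hneg : γ (-P.coroot γ) < 0 := by
    rw [map_neg, hpair]
    norm_num
  simpa only [refl_neg_coroot hγR] using chainGEAt_refl hγ ⟨-1, hturn⟩ hneg

theorem isCoweight_zero (P : CRS V) : P.IsCoweight 0 :=
  fun γ _ => ⟨0, by simp⟩

theorem coroot_add_eq_add_of_A2 (hdim : Module.finrank ℝ V = 2) {α β : V →ₗ[ℝ] ℝ} {ϖ₁ ϖ₂ : V}
    (hα : α ∈ P.R) (hβ : β ∈ P.R) (hαβ : α (P.coroot β) = -1) (hβα : β (P.coroot α) = -1)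
    (hco : P.coroot (α + β) = P.coroot α + P.coroot β)
    (hw11 : α ϖ₁ = 1) (hw12 : β ϖ₁ = 0) (hw21 : α ϖ₂ = 0) (hw22 : β ϖ₂ = 1) :
    P.coroot (α + β) = ϖ₁ + ϖ₂ := by
  have hdual : ∀ i j, ![α, β] i (![ϖ₁, ϖ₂] j) = if i = j then 1 else 0 := by
    simp [Fin.forall_fin_two, hw11, hw12, hw21, hw22]
  have hα₁ : α (P.coroot (α + β)) = 1 := by
    rw [hco, map_add, P.pairing_self α hα, hαβ]
    norm_num
  have hβ₁ : β (P.coroot (α + β)) = 1 := by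
    rw [hco, map_add, P.pairing_self β hβ, hβα]
    norm_num
  simpa [hα₁, hβ₁] using
    eq_sum_apply_smul_of_biorthogonal (by simpa using hdim) hdual (P.coroot (α + β))

theorem add_mem_chamber_of_A2 {α β : V →ₗ[ℝ] ℝ} {ϖ₁ ϖ₂ : V}
    (hRpos : (P.Rpos : Set (V →ₗ[ℝ] ℝ)) = {α, β, α + β})
    (hw11 : α ϖ₁ = 1) (hw12 : β ϖ₁ = 0) (hw21 : α ϖ₂ = 0) (hw22 : β ϖ₂ = 1) :
    ϖ₁ + ϖ₂ ∈ P.chamber := by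
  intro γ hγ
  rw [← Finset.mem_coe, hRpos] at hγ
  rcases hγ with rfl | rfl | rfl <;> simp [hw11, hw12, hw21, hw22]

end CRS

theorem hecke_path_not_integral_A2_general
    {V : Type*} [NormedAddCommGroup V] [InnerProductSpace ℝ V]
    [FiniteDimensional ℝ V] (P : CRS V) {α γ : V →ₗ[ℝ] ℝ}
    (hα : α ∈ P.simple) (hγ : γ ∈ P.Rpos) (hdom : P.coroot γ ∈ P.chamber)
    {n : ℤ} (hn : Odd n) (hαγ : α (P.coroot γ) = n) :
    P.IsHeckePath (zigzag (P.coroot γ)) ∧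
    P.DeltaLenOn (zigzag (P.coroot γ)) 0 1 (P.coroot γ) ∧
    zigzag (P.coroot γ) 1 = 0 ∧
    P.IsCoweight (zigzag (P.coroot γ) 1) ∧
    IsLeast {y : ℝ | ∃ t ∈ Set.Icc (0 : ℝ) 1, y = α (zigzag (P.coroot γ) t)} (-(n / 2)) ∧
    (¬ ∃ m : ℤ, -((n : ℝ) / 2) = m) ∧
    (∃ q : ℝ → V, q 0 = 0 ∧ P.IsHeckePath q ∧ P.IsCoweight (q 1) ∧
      ¬ (∀ δ ∈ P.simple, ∃ m : ℤ,
          IsLeast {y : ℝ | ∃ t ∈ Set.Icc (0 : ℝ) 1, y = δ (q t)} (m : ℝ))) := by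
  have hchain := CRS.chainGEAt_zigzag_coroot hγ
  have hHecke := CRS.isHeckePath_zigzag hchain
  have hcoweight : P.IsCoweight (zigzag (P.coroot γ) 1) :=
    (zigzag_one (P.coroot γ)).symm ▸ P.isCoweight_zero
  have hmin := isLeast_apply_zigzag (P.coroot γ) α (hdom α (P.simple_subset hα))
  rw [hαγ] at hmin
  have hnot := not_exists_int_eq_neg_half_of_odd hn
  refine ⟨hHecke, CRS.deltaLenOn_zigzag hdom hchain.sameOrbit, zigzag_one _, hcoweight, hmin, hnot,
    zigzag (P.coroot γ), zigzag_zero _, hHecke, hcoweight, fun hint => ?_⟩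
  obtain ⟨m, hm⟩ := hint α hα
  exact hnot ⟨m, hmin.unique hm⟩

/-- For the root system of type `A₂`, the path going from the origin to
`−(ϖ₁+ϖ₂)/2` and back to the origin is a Hecke path of Δ-length `ϖ₁+ϖ₂` with endpoint
in `P(R∨)`, yet `min_t α(p(t)) = −1/2 ∉ ℤ`; hence there is a Hecke path with endpoint a
coweight which does not lie in `𝒫_ℤ`. -/
theorem hecke_path_not_integral_A2
    {V : Type*} [NormedAddCommGroup V] [InnerProductSpace ℝ V]
    [FiniteDimensional ℝ V] (P : CRS V)
    (hdim : Module.finrank ℝ V = 2)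
    (α β : V →ₗ[ℝ] ℝ) (ϖ₁ ϖ₂ : V)
    (hR : (P.R : Set (V →ₗ[ℝ] ℝ)) = {α, β, α + β, -α, -β, -(α + β)})
    (hRpos : (P.Rpos : Set (V →ₗ[ℝ] ℝ)) = {α, β, α + β})
    (hsimple : (P.simple : Set (V →ₗ[ℝ] ℝ)) = {α, β})
    (hαβ : α (P.coroot β) = -1) (hβα : β (P.coroot α) = -1)
    (hco : P.coroot (α + β) = P.coroot α + P.coroot β)
    (hw11 : α ϖ₁ = 1) (hw12 : β ϖ₁ = 0) (hw21 : α ϖ₂ = 0) (hw22 : β ϖ₂ = 1) :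
    P.IsHeckePath (zigzag (ϖ₁ + ϖ₂)) ∧
    P.DeltaLenOn (zigzag (ϖ₁ + ϖ₂)) 0 1 (ϖ₁ + ϖ₂) ∧
    zigzag (ϖ₁ + ϖ₂) 1 = 0 ∧
    P.IsCoweight (zigzag (ϖ₁ + ϖ₂) 1) ∧
    IsLeast {y : ℝ | ∃ t ∈ Set.Icc (0 : ℝ) 1, y = α (zigzag (ϖ₁ + ϖ₂) t)}
      (-(1 / 2)) ∧
    (¬ ∃ n : ℤ, ((-(1 / 2) : ℝ) = (n : ℝ))) ∧
    (∃ q : ℝ → V, q 0 = 0 ∧ P.IsHeckePath q ∧ P.IsCoweight (q 1) ∧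
      ¬ (∀ γ ∈ P.simple, ∃ n : ℤ,
          IsLeast {y : ℝ | ∃ t ∈ Set.Icc (0 : ℝ) 1, y = γ (q t)} (n : ℝ))) := by
  have hα : α ∈ P.simple := by simp [← Finset.mem_coe, hsimple]
  have hαR : α ∈ P.R := by simp [← Finset.mem_coe, hR]
  have hβR : β ∈ P.R := by simp [← Finset.mem_coe, hR]
  have hγ : α + β ∈ P.Rpos := by simp [← Finset.mem_coe, hRpos]
  have hcoroot : P.coroot (α + β) = ϖ₁ + ϖ₂ :=
    CRS.coroot_add_eq_add_of_A2 hdim hαR hβR hαβ hβα hco hw11 hw12 hw21 hw22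
  have hdom : P.coroot (α + β) ∈ P.chamber :=
    hcoroot ▸ CRS.add_mem_chamber_of_A2 hRpos hw11 hw12 hw21 hw22
  have hpair : α (P.coroot (α + β)) = (1 : ℤ) := by simp [hcoroot, hw11, hw21]
  simpa only [hcoroot, Int.cast_one] using
    hecke_path_not_integral_A2_general P hα hγ hdom odd_one hpair
end
end
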